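/- arXiv:2502.18099 — 5 statements merged into one kernel-verified Lean document; each statement's English description precedes it below -/
import Mathlib

section
/- Fix an integer N ≥ 1, points ξ_1, …, ξ_N ∈ ℝ, and ε ≥ 0, and let α̂ = (1/N) Σ_{i=1}^N δ_{ξ_i} be their empirical measure. Then sup { ∫ ℓ dα : α ∈ U_ε(α̂) } = (1/N) Σ_{i=1}^N ℓ(ξ_i) + ε, where ℓ(ξ) = -log σ(ξ) = log(1+e^{-ξ}); equivalently, inf { ∫ log σ dα : α ∈ U_ε(α̂) } = (1/N) Σ_{i=1}^N log σ(ξ_i) − ε. -/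
open MeasureTheory ENNReal Real

/-- The logistic sigmoid σ(x) = 1/(1+e^{-x}). -/
noncomputable def logisticSigma (x : ℝ) : ℝ := 1 / (1 + Real.exp (-x))

/-- The logistic loss ℓ(ξ) = -log σ(ξ) = log(1+e^{-ξ}). -/
noncomputable def logisticLoss (x : ℝ) : ℝ := Real.log (1 + Real.exp (-x))

/-- γ is a coupling of α and β: its marginals are α and β. -/
def IsCoupling (γ : Measure (ℝ × ℝ)) (α β : Measure ℝ) : Prop :=
  γ.map Prod.fst = α ∧ γ.map Prod.snd = β

/-- Transport cost of a coupling: ∫ |x - y| dγ(x,y). -/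
noncomputable def transportCost (γ : Measure (ℝ × ℝ)) : ℝ≥0∞ :=
  ∫⁻ p, ENNReal.ofReal |p.1 - p.2| ∂γ

/-- The 1-Wasserstein ε-ball around ν: Borel probability measures admitting a
coupling with ν of transport cost at most ε. -/
def Uball (ε : ℝ) (ν : Measure ℝ) : Set (Measure ℝ) :=
  {α | IsProbabilityMeasure α ∧
    ∃ γ : Measure (ℝ × ℝ), IsCoupling γ α ν ∧ transportCost γ ≤ ENNReal.ofReal ε}

lemma ll_cont : Continuous logisticLoss := by
  unfold logisticLoss
  exact Continuous.log (by fun_prop) (fun x => by positivity)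

lemma ll_nonneg (x : ℝ) : 0 ≤ logisticLoss x :=
  Real.log_nonneg (by linarith [Real.exp_pos (-x)])

lemma ll_ge (x : ℝ) : -x ≤ logisticLoss x := by
  unfold logisticLoss
  rw [Real.le_log_iff_exp_le (by positivity)]
  linarith

lemma ll_lip (x y : ℝ) : logisticLoss x ≤ logisticLoss y + |x - y| := by
  unfold logisticLoss
  rw [Real.log_le_iff_le_exp (by positivity), Real.exp_add, Real.exp_log (by positivity)]
  have h1 : 1 ≤ Real.exp |x - y| := Real.one_le_exp (abs_nonneg _)
  have h2 : Real.exp (-x) ≤ Real.exp (-y) * Real.exp |x - y| := by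
    rw [← Real.exp_add]
    exact Real.exp_le_exp.2 (by linarith [neg_abs_le (x - y)])
  linarith

lemma log_sig (x : ℝ) : Real.log (logisticSigma x) = - logisticLoss x := by
  unfold logisticSigma logisticLoss
  rw [one_div, Real.log_inv]

lemma upper (ν : Measure ℝ) (hl : Integrable logisticLoss ν) (ε : ℝ) (hε : 0 ≤ ε)
    (α : Measure ℝ) (hα : α ∈ Uball ε ν) :
    ∫ x, logisticLoss x ∂α ≤ ∫ x, logisticLoss x ∂ν + ε := by
  obtain ⟨_, γ, ⟨rfl, rfl⟩, hc⟩ := hα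
  unfold transportCost at hc
  have hm : Measurable fun p : ℝ × ℝ => |p.1 - p.2| := by fun_prop
  have hd : Integrable (fun p : ℝ × ℝ => |p.1 - p.2|) γ := by
    refine ⟨hm.aestronglyMeasurable, ?_⟩
    rw [hasFiniteIntegral_iff_ofReal (Filter.Eventually.of_forall fun p => abs_nonneg _)]
    exact hc.trans_lt ENNReal.ofReal_lt_top
  have hde : ∫ p : ℝ × ℝ, |p.1 - p.2| ∂γ ≤ ε := by
    rw [integral_eq_lintegral_of_nonneg_ae (Filter.Eventually.of_forall fun p => abs_nonneg _)
      hm.aestronglyMeasurable]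
    exact ENNReal.toReal_le_of_le_ofReal hε hc
  have h2 : Integrable (fun p : ℝ × ℝ => logisticLoss p.2) γ :=
    hl.comp_measurable measurable_snd
  rw [integral_map measurable_fst.aemeasurable ll_cont.aestronglyMeasurable,
    integral_map measurable_snd.aemeasurable ll_cont.aestronglyMeasurable]
  calc ∫ p, logisticLoss p.1 ∂γ ≤ ∫ p, (logisticLoss p.2 + |p.1 - p.2|) ∂γ := by
        apply integral_mono_of_nonneg (Filter.Eventually.of_forall fun p => ll_nonneg _)
          (h2.add hd) (Filter.Eventually.of_forall fun p => ll_lip _ _)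
    _ = ∫ p, logisticLoss p.2 ∂γ + ∫ p : ℝ × ℝ, |p.1 - p.2| ∂γ := integral_add h2 hd
    _ ≤ _ := by linarith

lemma lower (ν : Measure ℝ) [IsProbabilityMeasure ν] (hl : Integrable logisticLoss ν)
    (hi : Integrable (fun x : ℝ => x) ν) (ε : ℝ) (hε : 0 ≤ ε) (t : ℝ) (ht : 0 < t) (ht1 : t ≤ 1) :
    ∃ α ∈ Uball ε ν, ∫ x, logisticLoss x ∂ν + ε - t * (∫ x, logisticLoss x ∂ν + ∫ x, x ∂ν)
      ≤ ∫ x, logisticLoss x ∂α := by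
  have hs : ENNReal.ofReal (1 - t) + ENNReal.ofReal t = 1 := by
    rw [← ENNReal.ofReal_add (by linarith) ht.le]; simp
  have hm1 : Measurable fun x : ℝ => (x, x) := by fun_prop
  have hm2 : Measurable fun x : ℝ => (x - ε / t, x) := by fun_prop
  have hm3 : Measurable fun x : ℝ => x - ε / t := by fun_prop
  have hc : Measurable fun p : ℝ × ℝ => ENNReal.ofReal |p.1 - p.2| := by fun_prop
  have hd : 0 ≤ ε / t := by positivity
  have hsm : ENNReal.ofReal (1 - t) • ν + ENNReal.ofReal t • ν = ν := by
    rw [← add_smul, hs, one_smul]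
  have hl3 : Integrable (fun x => logisticLoss (x - ε / t)) ν := by
    refine (hl.add (integrable_const (ε / t))).mono'
      (ll_cont.comp (by fun_prop)).aestronglyMeasurable (Filter.Eventually.of_forall fun x => ?_)
    rw [Real.norm_of_nonneg (ll_nonneg _)]
    have := ll_lip (x - ε / t) x
    have h : |x - ε / t - x| = ε / t := by
      rw [show x - ε / t - x = -(ε / t) by ring, abs_neg, abs_of_nonneg hd]
    rw [h] at this
    exact this
  have hmp : IsProbabilityMeasure (ν.map fun x : ℝ => x - ε / t) :=
    Measure.isProbabilityMeasure_map hm3.aemeasurable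
  refine ⟨ENNReal.ofReal (1 - t) • ν + ENNReal.ofReal t • ν.map (fun x => x - ε / t),
    ⟨⟨by simp [hs]⟩, ENNReal.ofReal (1 - t) • ν.map (fun x => (x, x)) +
      ENNReal.ofReal t • ν.map (fun x => (x - ε / t, x)), ⟨?_, ?_⟩, ?_⟩, ?_⟩
  · rw [Measure.map_add _ _ measurable_fst, Measure.map_smul, Measure.map_smul,
      Measure.map_map measurable_fst hm1, Measure.map_map measurable_fst hm2]
    congr 2
    exact Measure.map_id
  · rw [Measure.map_add _ _ measurable_snd, Measure.map_smul, Measure.map_smul,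
      Measure.map_map measurable_snd hm1, Measure.map_map measurable_snd hm2]
    change ENNReal.ofReal (1 - t) • ν.map id + ENNReal.ofReal t • ν.map id = ν
    rw [Measure.map_id, hsm]
  · unfold transportCost
    rw [lintegral_add_measure, lintegral_smul_measure, lintegral_smul_measure,
      lintegral_map hc hm1, lintegral_map hc hm2]
    simp only [sub_self, abs_zero, ENNReal.ofReal_zero, lintegral_zero, mul_zero, zero_add,
      sub_sub_cancel_left, abs_neg, abs_of_nonneg hd, lintegral_const, measure_univ, mul_one,
      smul_eq_mul]
    rw [← ENNReal.ofReal_mul ht.le, mul_div_cancel₀ _ ht.ne']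
  · have hl3' : Integrable logisticLoss (ν.map fun x => x - ε / t) :=
      (integrable_map_measure ll_cont.aestronglyMeasurable hm3.aemeasurable).2 hl3
    rw [integral_add_measure (hl.smul_measure ENNReal.ofReal_ne_top)
      (hl3'.smul_measure ENNReal.ofReal_ne_top), integral_smul_measure, integral_smul_measure,
      integral_map hm3.aemeasurable ll_cont.aestronglyMeasurable,
      ENNReal.toReal_ofReal (by linarith), ENNReal.toReal_ofReal ht.le]
    have h : ∫ x, (ε / t - x) ∂ν ≤ ∫ x, logisticLoss (x - ε / t) ∂ν :=
      integral_mono ((integrable_const _).sub hi) hl3 fun x => by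
        have := ll_ge (x - ε / t)
        simp only
        linarith
    rw [integral_sub (integrable_const _) hi] at h
    simp only [integral_const, probReal_univ, one_smul] at h
    have h' := mul_le_mul_of_nonneg_left h ht.le
    rw [mul_sub, mul_div_cancel₀ _ ht.ne'] at h'
    simp only [smul_eq_mul]
    linarith

lemma lub (ν : Measure ℝ) [IsProbabilityMeasure ν] (hl : Integrable logisticLoss ν)
    (hi : Integrable (fun x : ℝ => x) ν) (ε : ℝ) (hε : 0 ≤ ε) :
    IsLUB ((fun α => ∫ x, logisticLoss x ∂α) '' Uball ε ν) (∫ x, logisticLoss x ∂ν + ε) := by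
  constructor
  · rintro _ ⟨α, hα, rfl⟩
    exact upper ν hl ε hε α hα
  · intro b hb
    set A := ∫ x, logisticLoss x ∂ν + ε
    set C := ∫ x, logisticLoss x ∂ν + ∫ x, x ∂ν
    have key : ∀ t : ℝ, 0 < t → t ≤ 1 → A - t * C ≤ b := fun t h0 h1 => by
      obtain ⟨α, hα, h⟩ := lower ν hl hi ε hε t h0 h1
      exact h.trans (hb ⟨α, hα, rfl⟩)
    have hT : Filter.Tendsto (fun t : ℝ => A - t * C) (nhdsWithin 0 (Set.Ioi 0)) (nhds A) := by
      have : Continuous fun t : ℝ => A - t * C := by fun_prop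
      simpa using (this.tendsto 0).mono_left nhdsWithin_le_nhds
    refine le_of_tendsto hT ?_
    filter_upwards [Ioc_mem_nhdsGT (zero_lt_one (α := ℝ))] with t ht
    exact key t ht.1 ht.2

/-- closed-form follower value over the Wasserstein ball around the
empirical measure of ξ_1, …, ξ_N. -/
theorem stmt1 {N : ℕ} (hN : 1 ≤ N) (ξ : Fin N → ℝ) (ε : ℝ) (hε : 0 ≤ ε)
    (αhat : Measure ℝ)
    (hαhat : αhat = (N : ℝ≥0∞)⁻¹ • ∑ i, Measure.dirac (ξ i)) :
    sSup ((fun α => ∫ x, logisticLoss x ∂α) '' Uball ε αhat)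
      = (N : ℝ)⁻¹ * ∑ i, logisticLoss (ξ i) + ε ∧
    sInf ((fun α => ∫ x, Real.log (logisticSigma x) ∂α) '' Uball ε αhat)
      = (N : ℝ)⁻¹ * ∑ i, Real.log (logisticSigma (ξ i)) - ε := by
  have hN0 : (N : ℝ≥0∞) ≠ 0 := by simp; omega
  have hNi : (N : ℝ≥0∞)⁻¹ ≠ ∞ := ENNReal.inv_ne_top.2 hN0
  have hint : ∀ f : ℝ → ℝ, Integrable f αhat := fun f => by
    rw [hαhat]
    refine Integrable.smul_measure ?_ hNi
    exact integrable_finsetSum_measure.2 fun i _ => integrable_dirac (by simp)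
  have hval : ∫ x, logisticLoss x ∂αhat = (N : ℝ)⁻¹ * ∑ i, logisticLoss (ξ i) := by
    rw [hαhat, integral_smul_measure, integral_finsetSum_measure
      fun i _ => integrable_dirac (by simp)]
    simp
  have hprob : IsProbabilityMeasure αhat := ⟨by
    rw [hαhat]
    simp [ENNReal.inv_mul_cancel hN0 (ENNReal.natCast_ne_top N)]⟩
  have hL := lub αhat (hint _) (hint _) ε hε
  have hne : ((fun α => ∫ x, logisticLoss x ∂α) '' Uball ε αhat).Nonempty := by
    obtain ⟨α, hα, -⟩ := lower αhat (hint _) (hint _) ε hε 1 one_pos le_rfl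
    exact ⟨_, α, hα, rfl⟩
  have h1 := hL.csSup_eq hne
  rw [hval] at h1
  refine ⟨h1, ?_⟩
  have himg : ((fun α => ∫ x, Real.log (logisticSigma x) ∂α) '' Uball ε αhat)
      = -((fun α => ∫ x, logisticLoss x ∂α) '' Uball ε αhat) := by
    simp only [log_sig, integral_neg]
    rw [← Set.image_neg_eq_neg, Set.image_image]
  rw [himg, Real.sInf_def, neg_neg, h1]
  simp only [log_sig, Finset.sum_neg_distrib]
  ring
end

section
/- Fix integers N, K ≥ 1, reals a ≤ b and ε ≥ 0, points ξ_1, …, ξ_N ∈ [a,b] with empirical measure α̂ = (1/N) Σ_{i=1}^N δ_{ξ_i}, and affine coefficients a_1, …, a_K, b_1, …, b_K ∈ ℝ; set ℓ̃(ξ) = max_{1≤k≤K} (a_k ξ + b_k). Let A be the set of Borel probability measures α on ℝ with α([a,b]) = 1 that admit a coupling with α̂ of transport cost at most ε. Call a pair of real matrices (s_{ik})_{i≤N,k≤K}, (q_{ik})_{i≤N,k≤K} feasible if s_{ik} ≥ 0 for all i,k, Σ_{k=1}^K s_{ik} = 1 for every i, (1/N) Σ_{i=1}^N Σ_{k=1}^K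 |q_{ik}| ≤ ε, and a·s_{ik} ≤ s_{ik} ξ_i − q_{ik} ≤ b·s_{ik} for all i,k. Then sup_{α ∈ A} ∫ ℓ̃ dα = sup over feasible (s,q) of (1/N) Σ_{i=1}^N Σ_{k=1}^K [ s_{ik}(a_k ξ_i + b_k) − a_k q_{ik} ], and the supremum over the feasible set of matrices is attained by some feasible pair (s*, q*). -/
open MeasureTheory ENNReal Real

lemma core_aux {K : ℕ} (hK : 1 ≤ K) (a b : ℝ) (A B : Fin K → ℝ)
    (ltil : ℝ → ℝ) (hltil : ∀ x, ltil x = ⨆ k, A k * x + B k)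
    (κ : Measure ℝ) [IsProbabilityMeasure κ] (hκ : ∀ᵐ x ∂κ, x ∈ Set.Icc a b) (z : ℝ) :
    Integrable (fun x => |x - z|) κ ∧ Integrable ltil κ ∧ ∃ s q : Fin K → ℝ, (∀ k, 0 ≤ s k) ∧ ∑ k, s k = 1 ∧ ∑ k, |q k| ≤ ∫ x, |x - z| ∂κ ∧
      (∀ k, a * s k ≤ s k * z - q k ∧ s k * z - q k ≤ b * s k) ∧
      ∑ k, (s k * (A k * z + B k) - A k * q k) = ∫ x, ltil x ∂κ := by
  have : Nonempty (Fin K) := ⟨⟨0, hK⟩⟩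
  have hid : Integrable (fun x : ℝ => x) κ := by
    refine Integrable.of_bound (C := max |a| |b|) (by fun_prop) ?_
    filter_upwards [hκ] with x hx
    exact abs_le_max_abs_abs hx.1 hx.2
  have hmeas : Measurable ltil := by
    have : ltil = fun x => ⨆ k, A k * x + B k := funext hltil
    rw [this]
    exact Measurable.iSup (fun k => by fun_prop)
  have hex : ∀ x, ∃ k, ltil x = A k * x + B k := by
    intro x
    obtain ⟨k, hk⟩ := exists_eq_ciSup_of_finite (f := fun k => A k * x + B k)
    exact ⟨k, by rw [hltil, hk]⟩
  set E : Fin K → Set ℝ := fun k => {x | ltil x = A k * x + B k ∧ ∀ j, j < k → ltil x ≠ A j * x + B j} with hE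
  have hEm : ∀ k, MeasurableSet (E k) := by
    intro k
    have : E k = {x | ltil x = A k * x + B k} ∩ ⋂ j, ⋂ (_ : j < k), {x | ltil x = A j * x + B j}ᶜ := by
      ext x; simp [hE]
    rw [this]
    refine (measurableSet_eq_fun hmeas (by fun_prop)).inter ?_
    exact MeasurableSet.iInter fun j => MeasurableSet.iInter fun _ =>
      (measurableSet_eq_fun hmeas (by fun_prop)).compl
  have hEd : Pairwise (Function.onFun Disjoint E) := by
    intro i j hij
    rw [Function.onFun, Set.disjoint_left]
    rintro x ⟨h1, h2⟩ ⟨h3, h4⟩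
    rcases lt_or_gt_of_ne hij with h | h
    · exact h4 i h h1
    · exact h2 j h h3
  have hEu : (⋃ k, E k) = Set.univ := by
    rw [Set.eq_univ_iff_forall]
    intro x
    obtain ⟨k, hk, hmin⟩ := WellFounded.has_min (wellFounded_lt (α := Fin K)) {k | ltil x = A k * x + B k} (hex x)
    exact Set.mem_iUnion.2 ⟨k, hk, fun j hj h => hmin j h hj⟩
  have hpart : ∀ f : ℝ → ℝ, Integrable f κ → ∑ k, ∫ x in E k, f x ∂κ = ∫ x, f x ∂κ := by
    intro f hf
    rw [← integral_iUnion_fintype hEm hEd (fun _ => hf.integrableOn), hEu, setIntegral_univ]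
  have hsub : Integrable (fun x => x - z) κ := hid.sub (integrable_const _)
  have hsub' : Integrable (fun x => z - x) κ := (integrable_const _).sub hid
  have hl : Integrable ltil κ := by
    refine Integrable.mono' (g := fun x => ∑ k, |A k * x + B k|) ?_ hmeas.aestronglyMeasurable ?_
    · exact integrable_finsetSum _ fun k _ => ((hid.const_mul _).add (integrable_const _)).abs
    · refine Filter.Eventually.of_forall fun x => ?_
      obtain ⟨k, hk⟩ := hex x
      rw [Real.norm_eq_abs, hk]
      exact Finset.single_le_sum (f := fun k => |A k * x + B k|) (fun _ _ => abs_nonneg _) (Finset.mem_univ k)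
  have hs : ∀ k, ∫ x in E k, (1:ℝ) ∂κ = κ.real (E k) := by intro k; simp
  have hq : ∀ k, ∫ x in E k, (z - x) ∂κ = κ.real (E k) * z - ∫ x in E k, x ∂κ := by
    intro k
    rw [integral_sub (integrable_const _) hid.integrableOn]
    simp
  refine ⟨hsub.abs, hl, fun k => κ.real (E k), fun k => ∫ x in E k, (z - x) ∂κ, fun k => measureReal_nonneg, ?_, ?_, ?_, ?_⟩
  · have := hpart (fun _ => 1) (integrable_const _)
    simpa using this
  · rw [← hpart _ hsub.abs]
    refine Finset.sum_le_sum fun k _ => ?_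
    refine (abs_integral_le_integral_abs).trans (le_of_eq ?_)
    simp_rw [abs_sub_comm]
  · intro k
    beta_reduce
    rw [hq, _root_.sub_sub_cancel]
    constructor
    · have := setIntegral_mono_ae (μ := κ) (s := E k) (f := fun _ => a) (g := fun x => x) (integrable_const _) hid.integrableOn
        (by filter_upwards [hκ] with x hx using hx.1)
      simpa [mul_comm] using this
    · have := setIntegral_mono_ae (μ := κ) (s := E k) (g := fun _ => b) (f := fun x => x) hid.integrableOn (integrable_const _)
        (by filter_upwards [hκ] with x hx using hx.2)
      simpa [mul_comm] using this
  · rw [← hpart _ hl]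
    refine Finset.sum_congr rfl fun k _ => ?_
    beta_reduce
    rw [setIntegral_congr_fun (g := fun x => A k * x + B k) (hEm k) (fun x hx => hx.1), hq,
      integral_add (hid.integrableOn.const_mul _) (integrable_const _), integral_const_mul]
    simp
    ring

open scoped ProbabilityTheory in
lemma disint_aux {N : ℕ} (ξ : Fin N → ℝ) (γ : Measure (ℝ × ℝ)) [IsFiniteMeasure γ]
    (h : γ.map Prod.snd = (N : ℝ≥0∞)⁻¹ • ∑ i, Measure.dirac (ξ i)) :
    ∃ κ : Fin N → Measure ℝ, (∀ i, IsProbabilityMeasure (κ i)) ∧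
      ∀ f : ℝ × ℝ → ℝ≥0∞, Measurable f →
        ∫⁻ p, f p ∂γ = (N : ℝ≥0∞)⁻¹ * ∑ i, ∫⁻ x, f (x, ξ i) ∂(κ i) := by
  set ρ := γ.map Prod.swap with hρ
  have hfst : ρ.fst = (N : ℝ≥0∞)⁻¹ • ∑ i, Measure.dirac (ξ i) := by
    rw [← h, hρ, Measure.fst_map_swap]; rfl
  refine ⟨fun i => ρ.condKernel (ξ i), fun i => inferInstance, fun f hf => ?_⟩
  have h1 : ∫⁻ p, f p ∂γ = ∫⁻ p, f p.swap ∂ρ := by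
    rw [hρ, lintegral_map (by fun_prop) measurable_swap]; simp
  have h2 : ∫⁻ p, f p.swap ∂ρ = ∫⁻ p, f p.swap ∂(ρ.fst ⊗ₘ ρ.condKernel) := by
    rw [ρ.disintegrate ρ.condKernel]
  rw [h1, h2, Measure.lintegral_compProd (by fun_prop), hfst,
    lintegral_smul_measure, lintegral_finsetSum_measure]
  simp_rw [lintegral_dirac, smul_eq_mul]
  rfl

lemma upper_aux {N K : ℕ} (hN : 1 ≤ N) (hK : 1 ≤ K)
    (a b ε : ℝ) (hε : 0 ≤ ε) (ξ : Fin N → ℝ) (A B : Fin K → ℝ)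
    (ltil : ℝ → ℝ) (hltil : ∀ x, ltil x = ⨆ k, A k * x + B k)
    (α : Measure ℝ) (hα : IsProbabilityMeasure α) (hαI : α (Set.Icc a b) = 1)
    (γ : Measure (ℝ × ℝ)) (hγ : IsCoupling γ α ((N : ℝ≥0∞)⁻¹ • ∑ i, Measure.dirac (ξ i)))
    (hcost : transportCost γ ≤ ENNReal.ofReal ε) :
    ∃ s q : Fin N → Fin K → ℝ, ((∀ i k, 0 ≤ s i k) ∧ (∀ i, ∑ k, s i k = 1) ∧
      ((N : ℝ)⁻¹ * ∑ i, ∑ k, |q i k| ≤ ε) ∧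
      (∀ i k, a * s i k ≤ s i k * ξ i - q i k ∧ s i k * ξ i - q i k ≤ b * s i k)) ∧
      ∫ x, ltil x ∂α = (N : ℝ)⁻¹ * ∑ i, ∑ k, (s i k * (A k * ξ i + B k) - A k * q i k) := by
  have hγp : IsProbabilityMeasure γ := by
    constructor
    have h := measure_univ (μ := α)
    rw [← hγ.1, Measure.map_apply measurable_fst MeasurableSet.univ] at h
    simpa using h
  obtain ⟨κ, hκp, hκ⟩ := disint_aux ξ γ hγ.2
  have hN0 : (N : ℝ≥0∞)⁻¹ ≠ 0 := by simp
  have hNr : ((N : ℝ≥0∞)⁻¹).toReal = (N : ℝ)⁻¹ := by simp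
  have hαs : α = (N : ℝ≥0∞)⁻¹ • ∑ i, κ i := by
    ext t ht
    have h1 := hκ (fun p => t.indicator 1 p.1) (by
      exact (measurable_one.indicator ht).comp measurable_fst)
    rw [← hγ.1, ← lintegral_indicator_one ht,
      lintegral_map (measurable_one.indicator ht) measurable_fst, h1]
    simp [lintegral_indicator_one ht, Measure.finsetSum_apply]
  have hae : ∀ i, ∀ᵐ x ∂(κ i), x ∈ Set.Icc a b := by
    have h0 : α (Set.Icc a b)ᶜ = 0 := (prob_compl_eq_zero_iff measurableSet_Icc).2 hαI
    rw [hαs] at h0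
    intro i
    rw [ae_iff]
    have h3 : (N : ℝ≥0∞)⁻¹ * ∑ i, κ i (Set.Icc a b)ᶜ = 0 := by
      simpa [Measure.finsetSum_apply] using h0
    have h4 := (mul_eq_zero.1 h3).resolve_left hN0
    exact Finset.sum_eq_zero_iff.1 h4 i (Finset.mem_univ i)
  have hc := fun i => core_aux hK a b A B ltil hltil (κ i) (hae i) (ξ i)
  choose hi1 hi2 s q hs0 hs1 hq hbd hobj using hc
  refine ⟨s, q, ⟨hs0, hs1, ?_, hbd⟩, ?_⟩
  · have h1 : (N : ℝ)⁻¹ * ∑ i, ∫ x, |x - ξ i| ∂(κ i) ≤ ε := by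
      rw [← ENNReal.ofReal_le_ofReal_iff hε]
      refine le_trans (le_of_eq ?_) hcost
      rw [transportCost, hκ _ (by fun_prop), ENNReal.ofReal_mul (by positivity),
        ENNReal.ofReal_sum_of_nonneg (fun i _ => integral_nonneg fun x => abs_nonneg _)]
      congr 1
      · rw [ENNReal.ofReal_inv_of_pos (by exact_mod_cast hN)]; simp
      · refine Finset.sum_congr rfl fun i _ => ?_
        exact ofReal_integral_eq_lintegral_ofReal (hi1 i) (Filter.Eventually.of_forall fun x => abs_nonneg _)
    refine le_trans ?_ h1
    gcongr with i
    exact hq i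
  · rw [hαs, integral_smul_measure, integral_finsetSum_measure (fun i _ => hi2 i), hNr, smul_eq_mul]
    simp_rw [hobj]

lemma lower_aux {N K : ℕ} (hN : 1 ≤ N)
    (a b ε : ℝ) (ξ : Fin N → ℝ) (hξ : ∀ i, ξ i ∈ Set.Icc a b) (A B : Fin K → ℝ)
    (ltil : ℝ → ℝ) (hltil : ∀ x, ltil x = ⨆ k, A k * x + B k)
    (s q : Fin N → Fin K → ℝ) (hs0 : ∀ i k, 0 ≤ s i k) (hs1 : ∀ i, ∑ k, s i k = 1)
    (hq : (N : ℝ)⁻¹ * ∑ i, ∑ k, |q i k| ≤ ε)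
    (hbd : ∀ i k, a * s i k ≤ s i k * ξ i - q i k ∧ s i k * ξ i - q i k ≤ b * s i k) :
    ∃ α : Measure ℝ, (IsProbabilityMeasure α ∧ α (Set.Icc a b) = 1 ∧
      ∃ γ : Measure (ℝ × ℝ), IsCoupling γ α ((N : ℝ≥0∞)⁻¹ • ∑ i, Measure.dirac (ξ i)) ∧
        transportCost γ ≤ ENNReal.ofReal ε) ∧
      (N : ℝ)⁻¹ * ∑ i, ∑ k, (s i k * (A k * ξ i + B k) - A k * q i k) ≤ ∫ x, ltil x ∂α := by
  have hNpos : (0 : ℝ) < N := by exact_mod_cast hN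
  set x : Fin N → Fin K → ℝ := fun i k => ξ i - q i k / s i k with hx
  have hq0 : ∀ i k, s i k = 0 → q i k = 0 := by
    intro i k h
    have := hbd i k
    rw [h] at this
    linarith [this.1, this.2]
  have hsx : ∀ i k, s i k * x i k = s i k * ξ i - q i k := by
    intro i k
    by_cases h : s i k = 0
    · simp [h, hq0 i k h]
    · simp only [hx]; field_simp
  have hxI : ∀ i k, x i k ∈ Set.Icc a b := by
    intro i k
    by_cases h : s i k = 0
    · simpa [hx, h] using hξ i
    · have hp : 0 < s i k := lt_of_le_of_ne (hs0 i k) (Ne.symm h)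
      have := hbd i k
      rw [← hsx] at this
      constructor
      · nlinarith [this.1]
      · nlinarith [this.2]
  have hw0 : ∀ i k, 0 ≤ (N : ℝ)⁻¹ * s i k := fun i k => mul_nonneg (by positivity) (hs0 i k)
  have hwsum : ∀ i, ∑ k, ENNReal.ofReal ((N : ℝ)⁻¹ * s i k) = (N : ℝ≥0∞)⁻¹ := by
    intro i
    rw [← ENNReal.ofReal_sum_of_nonneg (fun k _ => hw0 i k), ← Finset.mul_sum, hs1, mul_one,
      ENNReal.ofReal_inv_of_pos hNpos]
    simp
  set α : Measure ℝ := ∑ i, ∑ k, ENNReal.ofReal ((N : ℝ)⁻¹ * s i k) • Measure.dirac (x i k) with hα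
  set γ : Measure (ℝ × ℝ) :=
    ∑ i, ∑ k, ENNReal.ofReal ((N : ℝ)⁻¹ * s i k) • Measure.dirac (x i k, ξ i) with hγ
  have htot : ∑ i : Fin N, ∑ k, ENNReal.ofReal ((N : ℝ)⁻¹ * s i k) = 1 := by
    simp_rw [hwsum]
    simp only [Finset.sum_const, Finset.card_univ, Fintype.card_fin, nsmul_eq_mul]
    exact ENNReal.mul_inv_cancel (by exact_mod_cast (by omega : N ≠ 0)) (by simp)
  refine ⟨α, ⟨⟨?_⟩, ?_, γ, ⟨?_, ?_⟩, ?_⟩, ?_⟩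
  · simpa [hα, Measure.finsetSum_apply] using htot
  · rw [← htot, hα]
    simp only [Measure.finsetSum_apply, Measure.smul_apply, smul_eq_mul,
      Measure.dirac_apply' _ measurableSet_Icc]
    simp [Set.indicator_of_mem (hxI _ _)]
  · ext t ht
    rw [Measure.map_apply measurable_fst ht]
    simp only [hα, hγ, Measure.finsetSum_apply, Measure.smul_apply, smul_eq_mul,
      Measure.dirac_apply' _ ht, Measure.dirac_apply' _ (measurable_fst ht)]
    rfl
  · ext t ht
    rw [Measure.map_apply measurable_snd ht]
    simp only [hγ, Measure.finsetSum_apply, Measure.smul_apply, smul_eq_mul,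
      Measure.dirac_apply' _ ht, Measure.dirac_apply' _ (measurable_snd ht)]
    rw [Finset.mul_sum]
    refine Finset.sum_congr rfl fun i _ => ?_
    rw [← hwsum i, Finset.sum_mul]
    rfl
  · refine le_trans (le_of_eq ?_) (ENNReal.ofReal_le_ofReal hq)
    rw [transportCost, hγ, lintegral_finsetSum_measure]
    simp_rw [lintegral_finsetSum_measure, lintegral_smul_measure, lintegral_dirac, smul_eq_mul]
    rw [Finset.mul_sum, ENNReal.ofReal_sum_of_nonneg (fun i _ => by positivity)]
    refine Finset.sum_congr rfl fun i _ => ?_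
    rw [Finset.mul_sum, ENNReal.ofReal_sum_of_nonneg (fun i _ => by positivity)]
    refine Finset.sum_congr rfl fun k _ => ?_
    rw [← ENNReal.ofReal_mul (hw0 i k)]
    congr 1
    rw [mul_assoc]
    congr 1
    have h1 : s i k * (x i k - ξ i) = - q i k := by rw [mul_sub, hsx]; ring
    rw [← abs_neg (q i k), ← h1, abs_mul, abs_of_nonneg (hs0 i k)]
  · have hint : ∀ i k, Integrable ltil (ENNReal.ofReal ((N : ℝ)⁻¹ * s i k) • Measure.dirac (x i k)) :=
      fun i k => (integrable_dirac (by simp)).smul_measure ENNReal.ofReal_ne_top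
    rw [hα, integral_finsetSum_measure
      (fun i _ => integrable_finsetSum_measure.2 fun k _ => hint i k), Finset.mul_sum]
    refine Finset.sum_le_sum fun i _ => ?_
    rw [integral_finsetSum_measure (fun k _ => hint i k), Finset.mul_sum]
    refine Finset.sum_le_sum fun k _ => ?_
    rw [integral_smul_measure, integral_dirac, ENNReal.toReal_ofReal (hw0 i k), smul_eq_mul, mul_assoc]
    refine mul_le_mul_of_nonneg_left ?_ (by positivity)
    have h1 : A k * x i k + B k ≤ ltil (x i k) := by
      rw [hltil]
      exact le_ciSup (f := fun j => A j * x i k + B j) (Set.finite_range _).bddAbove k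
    have h2 := mul_le_mul_of_nonneg_left h1 (hs0 i k)
    have h3 := hsx i k
    calc _ = s i k * (A k * x i k + B k) := by linear_combination (-A k) * h3
      _ ≤ _ := h2

/-- the worst-case expectation of a max-of-affine loss over the
support-constrained Wasserstein ball equals the value of a finite convex
program, and the latter supremum is attained. -/
theorem stmt2 {N K : ℕ} (hN : 1 ≤ N) (hK : 1 ≤ K)
    (a b ε : ℝ) (hab : a ≤ b) (hε : 0 ≤ ε)
    (ξ : Fin N → ℝ) (hξ : ∀ i, ξ i ∈ Set.Icc a b)
    (A B : Fin K → ℝ)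
    (ltil : ℝ → ℝ) (hltil : ∀ x, ltil x = ⨆ k, A k * x + B k)
    (αhat : Measure ℝ)
    (hαhat : αhat = (N : ℝ≥0∞)⁻¹ • ∑ i, Measure.dirac (ξ i))
    (Amb : Set (Measure ℝ))
    (hAmb : Amb = {α | IsProbabilityMeasure α ∧ α (Set.Icc a b) = 1 ∧
      ∃ γ : Measure (ℝ × ℝ), IsCoupling γ α αhat ∧ transportCost γ ≤ ENNReal.ofReal ε})
    (Feas : (Fin N → Fin K → ℝ) → (Fin N → Fin K → ℝ) → Prop)
    (hFeas : ∀ s q, Feas s q ↔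
      (∀ i k, 0 ≤ s i k) ∧ (∀ i, ∑ k, s i k = 1) ∧
      ((N : ℝ)⁻¹ * ∑ i, ∑ k, |q i k| ≤ ε) ∧
      (∀ i k, a * s i k ≤ s i k * ξ i - q i k ∧ s i k * ξ i - q i k ≤ b * s i k))
    (obj : (Fin N → Fin K → ℝ) → (Fin N → Fin K → ℝ) → ℝ)
    (hobj : ∀ s q, obj s q =
      (N : ℝ)⁻¹ * ∑ i, ∑ k, (s i k * (A k * ξ i + B k) - A k * q i k)) :
    sSup ((fun α => ∫ x, ltil x ∂α) '' Amb)
      = sSup {v | ∃ s q, Feas s q ∧ v = obj s q} ∧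
    ∃ s q, Feas s q ∧ obj s q = sSup {v | ∃ s q, Feas s q ∧ v = obj s q} := by
  subst hαhat hAmb
  have hattain : ∃ s q, Feas s q ∧ ∀ s' q', Feas s' q' → obj s' q' ≤ obj s q := by
    set S : Set ((Fin N → Fin K → ℝ) × (Fin N → Fin K → ℝ)) := {p | Feas p.1 p.2} with hS
    have hne : S.Nonempty := by
      refine ⟨(fun _ k => if k = ⟨0, hK⟩ then 1 else 0, fun _ _ => 0), ?_⟩
      simp only [hS, Set.mem_setOf_eq, hFeas]
      refine ⟨fun i k => by split_ifs <;> norm_num, fun i => by simp, by simpa using hε, fun i k => ?_⟩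
      have := hξ i
      split_ifs
      · simpa using this
      · simp
    have hclosed : IsClosed S := by
      simp only [hS, hFeas, Set.setOf_and, Set.setOf_forall]
      refine IsClosed.inter (isClosed_iInter fun i => isClosed_iInter fun k =>
        isClosed_le (by fun_prop) (by fun_prop)) (IsClosed.inter (isClosed_iInter fun i =>
        isClosed_eq (by fun_prop) (by fun_prop)) (IsClosed.inter
        (isClosed_le (by fun_prop) (by fun_prop)) (isClosed_iInter fun i => isClosed_iInter fun k =>
        IsClosed.inter (isClosed_le (by fun_prop) (by fun_prop))
          (isClosed_le (by fun_prop) (by fun_prop)))))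
    have hcomp : IsCompact S := by
      refine IsCompact.of_isClosed_subset
        (isCompact_Icc (a := ((fun _ _ => 0, fun _ _ => -(b - a)) :
            (Fin N → Fin K → ℝ) × (Fin N → Fin K → ℝ)))
          (b := (fun _ _ => 1, fun _ _ => b - a))) hclosed ?_
      rintro ⟨s, q⟩ h
      simp only [hS, Set.mem_setOf_eq, hFeas] at h
      obtain ⟨h0, h1, -, h3⟩ := h
      have hle : ∀ i k, s i k ≤ 1 := fun i k => by
        rw [← h1 i]
        exact Finset.single_le_sum (fun j _ => h0 i j) (Finset.mem_univ k)
      refine ⟨⟨fun i k => h0 i k, fun i k => ?_⟩, ⟨fun i k => hle i k, fun i k => ?_⟩⟩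
      · have := h3 i k; have := hξ i; have := hle i k; have := h0 i k
        show -(b - a) ≤ q i k
        nlinarith [(h3 i k).1, (h3 i k).2, (hξ i).1, (hξ i).2,
          mul_nonneg (h0 i k) (sub_nonneg.2 (hξ i).1),
          mul_nonneg (sub_nonneg.2 (hle i k)) (sub_nonneg.2 hab)]
      · show q i k ≤ b - a
        nlinarith [(h3 i k).1, (h3 i k).2, (hξ i).1, (hξ i).2,
          mul_nonneg (h0 i k) (sub_nonneg.2 (hξ i).2),
          mul_nonneg (sub_nonneg.2 (hle i k)) (sub_nonneg.2 hab)]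
    obtain ⟨p, hp, hmax⟩ := hcomp.exists_isMaxOn hne (f := fun p => obj p.1 p.2) (by
      simp only [hobj]
      fun_prop)
    exact ⟨p.1, p.2, hp, fun s' q' h => hmax (show (s', q') ∈ S from h)⟩
  obtain ⟨s, q, hsq, hmax⟩ := hattain
  have hsup : sSup {v | ∃ s q, Feas s q ∧ v = obj s q} = obj s q := by
    refine IsGreatest.csSup_eq ⟨⟨s, q, hsq, rfl⟩, ?_⟩
    rintro v ⟨s', q', h, rfl⟩
    exact hmax s' q' h
  refine ⟨?_, s, q, hsq, hsup.symm⟩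
  rw [hsup]
  have hub : ∀ v ∈ ((fun α => ∫ x, ltil x ∂α) '' {α | IsProbabilityMeasure α ∧
      α (Set.Icc a b) = 1 ∧ ∃ γ : Measure (ℝ × ℝ),
        IsCoupling γ α ((N : ℝ≥0∞)⁻¹ • ∑ i, Measure.dirac (ξ i)) ∧
        transportCost γ ≤ ENNReal.ofReal ε}), v ≤ obj s q := by
    rintro v ⟨α, ⟨h1, h2, γ, h3, h4⟩, rfl⟩
    obtain ⟨s', q', hf, he⟩ := upper_aux hN hK a b ε hε ξ A B ltil hltil α h1 h2 γ h3 h4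
    have := hmax s' q' ((hFeas _ _).2 hf)
    rw [hobj s' q'] at this
    exact he.le.trans this
  obtain ⟨h0, h1, h2, h3⟩ := (hFeas s q).1 hsq
  obtain ⟨α, hα, hle⟩ := lower_aux hN a b ε ξ hξ A B ltil hltil s q h0 h1 h2 h3
  refine le_antisymm (csSup_le ⟨_, α, hα, rfl⟩ hub) ?_
  rw [hobj s q]
  exact hle.trans (le_csSup ⟨_, hub⟩ ⟨α, hα, rfl⟩)
end

section
/- Fix integers N, K ≥ 1, reals a ≤ b and ε ≥ 0, points ξ_1, …, ξ_N ∈ [a,b] with empirical measure α̂ = (1/N) Σ_{i=1}^N δ_{ξ_i}, and affine coefficients a_1, …, a_K, b_1, …, b_K ∈ ℝ; set ℓ̃(ξ) = max_{1≤k≤K} (a_k ξ + b_k). Suppose real matrices (s_{ik}), (q_{ik}) satisfy s_{ik} > 0 for all i,k, Σ_{k=1}^K s_{ik} = 1 for every i, (1/N) Σ_{i,k} |q_{ik}| ≤ ε, and a·s_{ik} ≤ s_{ik} ξ_i − q_{ik} ≤ b·s_{ik} for all i,k. Then the discrete measure α = (1/N) Σ_{i=1}^N Σ_{k=1}^K s_{ik}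 δ_{ξ_i − q_{ik}/s_{ik}} is a Borel probability measure with α([a,b]) = 1 that admits a coupling with α̂ of transport cost at most ε, and ∫ ℓ̃ dα ≥ (1/N) Σ_{i=1}^N Σ_{k=1}^K [ s_{ik}(a_k ξ_i + b_k) − a_k q_{ik} ]. -/
open MeasureTheory ENNReal Real

/-- the extremal discrete measure built from a feasible pair (s,q)
lies in the support-constrained Wasserstein ball around the empirical measure
and attains at least the convex-program objective value. -/
theorem stmt3 {N K : ℕ} (hN : 1 ≤ N) (hK : 1 ≤ K)
    (a b ε : ℝ) (hab : a ≤ b) (hε : 0 ≤ ε)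
    (ξ : Fin N → ℝ) (hξ : ∀ i, ξ i ∈ Set.Icc a b)
    (A B : Fin K → ℝ)
    (s q : Fin N → Fin K → ℝ)
    (hs : ∀ i k, 0 < s i k) (hs1 : ∀ i, ∑ k, s i k = 1)
    (hq : (N : ℝ)⁻¹ * ∑ i, ∑ k, |q i k| ≤ ε)
    (hbox : ∀ i k, a * s i k ≤ s i k * ξ i - q i k ∧ s i k * ξ i - q i k ≤ b * s i k)
    (αhat αm : Measure ℝ)
    (hαhat : αhat = (N : ℝ≥0∞)⁻¹ • ∑ i, Measure.dirac (ξ i))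
    (hαm : αm = (N : ℝ≥0∞)⁻¹ •
      ∑ i, ∑ k, ENNReal.ofReal (s i k) • Measure.dirac (ξ i - q i k / s i k)) :
    IsProbabilityMeasure αm ∧
    αm (Set.Icc a b) = 1 ∧
    (∃ γ : Measure (ℝ × ℝ), IsCoupling γ αm αhat ∧ transportCost γ ≤ ENNReal.ofReal ε) ∧
    ∫ x, (⨆ k, A k * x + B k) ∂αm ≥
      (N : ℝ)⁻¹ * ∑ i, ∑ k, (s i k * (A k * ξ i + B k) - A k * q i k) := by
  have hN0 : (N : ℝ≥0∞) ≠ 0 := by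
    have : N ≠ 0 := by omega
    exact_mod_cast this
  have hNt : (N : ℝ≥0∞) ≠ ⊤ := ENNReal.natCast_ne_top N
  have hsum : ∀ i, ∑ k, ENNReal.ofReal (s i k) = 1 := by
    intro i
    rw [← ENNReal.ofReal_sum_of_nonneg (fun k _ => (hs i k).le), hs1, ENNReal.ofReal_one]
  have hmem : ∀ i k, ξ i - q i k / s i k ∈ Set.Icc a b := by
    intro i k
    have h := hs i k
    have e : ξ i - q i k / s i k = (s i k * ξ i - q i k) / s i k := by field_simp
    rw [e]
    exact ⟨(le_div_iff₀ h).2 (hbox i k).1, (div_le_iff₀ h).2 (hbox i k).2⟩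
  have hone : ∀ S : Set ℝ, MeasurableSet S → (∀ i k, ξ i - q i k / s i k ∈ S) → αm S = 1 := by
    intro S hS h
    rw [hαm]
    simp only [Measure.smul_apply, Measure.finsetSum_apply, smul_eq_mul,
      Measure.dirac_apply' _ hS, Set.indicator_of_mem (h _ _), Pi.one_apply, mul_one, hsum]
    simp only [Finset.sum_const, Finset.card_univ, Fintype.card_fin, nsmul_eq_mul, mul_one]
    exact ENNReal.inv_mul_cancel hN0 hNt
  refine ⟨⟨hone _ MeasurableSet.univ (fun _ _ => Set.mem_univ _)⟩,
    hone _ measurableSet_Icc hmem, ?_, ?_⟩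
  · refine ⟨(N : ℝ≥0∞)⁻¹ • ∑ i, ∑ k, ENNReal.ofReal (s i k) •
      Measure.dirac (ξ i - q i k / s i k, ξ i), ⟨?_, ?_⟩, ?_⟩
    · rw [hαm]
      ext S hS
      rw [Measure.map_apply measurable_fst hS]
      simp only [Measure.smul_apply, Measure.finsetSum_apply, smul_eq_mul,
        Measure.dirac_apply' _ hS, Measure.dirac_apply' _ (measurable_fst hS)]
      rfl
    · rw [hαhat]
      ext S hS
      rw [Measure.map_apply measurable_snd hS]
      simp only [Measure.smul_apply, Measure.finsetSum_apply, smul_eq_mul,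
        Measure.dirac_apply' _ hS, Measure.dirac_apply' _ (measurable_snd hS)]
      congr 1
      refine Finset.sum_congr rfl fun i _ => ?_
      calc _ = ∑ k, ENNReal.ofReal (s i k) * S.indicator 1 (ξ i) := rfl
        _ = _ := by rw [← Finset.sum_mul, hsum, one_mul]
    · have hcost : ∀ i k, ENNReal.ofReal (s i k) *
          ENNReal.ofReal |ξ i - q i k / s i k - ξ i| = ENNReal.ofReal |q i k| := by
        intro i k
        have h := hs i k
        rw [← ENNReal.ofReal_mul h.le]
        congr 1
        have e : ξ i - q i k / s i k - ξ i = -(q i k / s i k) := by ring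
        rw [e, abs_neg, abs_div, abs_of_pos h]
        field_simp
      unfold transportCost
      simp only [lintegral_smul_measure, lintegral_finsetSum_measure, lintegral_dirac,
        smul_eq_mul, hcost]
      refine le_trans (le_of_eq ?_) (ENNReal.ofReal_le_ofReal hq)
      have hNpos : (0 : ℝ) < N := by exact_mod_cast hN
      rw [ENNReal.ofReal_mul (by positivity), ENNReal.ofReal_inv_of_pos hNpos,
        ENNReal.ofReal_natCast,
        ENNReal.ofReal_sum_of_nonneg (fun i _ => Finset.sum_nonneg fun k _ => abs_nonneg _)]
      congr 1
      refine Finset.sum_congr rfl fun i _ => ?_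
      rw [ENNReal.ofReal_sum_of_nonneg (fun k _ => abs_nonneg _)]
  · have hint : ∀ (f : ℝ → ℝ) i k, Integrable f
        (ENNReal.ofReal (s i k) • Measure.dirac (ξ i - q i k / s i k)) := fun f i k =>
      (integrable_dirac (by simp)).smul_measure ENNReal.ofReal_ne_top
    rw [hαm, integral_smul_measure, integral_finsetSum_measure
      (fun i _ => integrable_finsetSum_measure.2 fun k _ => hint _ i k)]
    simp only [smul_eq_mul, ENNReal.toReal_inv, ENNReal.toReal_natCast, ge_iff_le]
    refine mul_le_mul_of_nonneg_left (Finset.sum_le_sum fun i _ => ?_) (by positivity)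
    rw [integral_finsetSum_measure (fun k _ => hint _ i k)]
    refine Finset.sum_le_sum fun k _ => ?_
    have h := hs i k
    rw [integral_smul_measure, integral_dirac, ENNReal.toReal_ofReal h.le, smul_eq_mul]
    have hle : A k * (ξ i - q i k / s i k) + B k ≤
        ⨆ k', A k' * (ξ i - q i k / s i k) + B k' :=
      le_ciSup (f := fun k' => A k' * (ξ i - q i k / s i k) + B k')
        (Set.finite_range _).bddAbove k
    refine le_trans (le_of_eq ?_) (mul_le_mul_of_nonneg_left hle h.le)
    field_simp
    ring
end

section
/- Let ν be a Borel probability measure on ℝ with finite first moment, let ε ≥ 0, and set S = U_ε(ν). Let T ⊆ S be nonempty, and let d ≥ 0 be such that every α ∈ S admits some α' ∈ T and a coupling of α and α' with transport cost at most d. Then 0 ≤ inf_{α∈T} ∫ log σ dα − inf_{α∈S} ∫ log σ dα ≤ d. -/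
open MeasureTheory ENNReal Real

lemma logSigma_lip (x y : ℝ) :
    Real.log (logisticSigma x) - Real.log (logisticSigma y) ≤ |x - y| := by
  unfold logisticSigma
  rw [one_div, one_div, Real.log_inv, Real.log_inv]
  have hx : 0 < 1 + Real.exp (-x) := by positivity
  have hy : 0 < 1 + Real.exp (-y) := by positivity
  have h : 1 + Real.exp (-y) ≤ Real.exp |x - y| * (1 + Real.exp (-x)) := by
    have h1 : 1 ≤ Real.exp |x - y| := Real.one_le_exp (abs_nonneg _)
    have h2 : Real.exp (-y) ≤ Real.exp |x - y| * Real.exp (-x) := by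
      rw [← Real.exp_add]
      apply Real.exp_le_exp.mpr
      linarith [le_abs_self (x - y)]
    nlinarith
  have h3 := Real.log_le_log hy h
  rw [Real.log_mul (by positivity) (by positivity), Real.log_exp] at h3
  linarith

lemma logSigma_abs (x y : ℝ) :
    |Real.log (logisticSigma x) - Real.log (logisticSigma y)| ≤ |x - y| := by
  rw [abs_le]
  have h1 := logSigma_lip x y
  have h2 := logSigma_lip y x
  rw [abs_sub_comm y x] at h2
  constructor <;> linarith

lemma logSigma_meas : Measurable (fun x : ℝ => Real.log (logisticSigma x)) := by
  unfold logisticSigma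
  fun_prop

lemma coupling_key (α β : Measure ℝ) (hα : IsProbabilityMeasure α) (c : ℝ) (hc : 0 ≤ c)
    (γ : Measure (ℝ × ℝ)) (hγ : IsCoupling γ α β) (hcost : transportCost γ ≤ ENNReal.ofReal c)
    (hβ : Integrable (fun x : ℝ => Real.log (logisticSigma x)) β) :
    Integrable (fun x : ℝ => Real.log (logisticSigma x)) α ∧
    |(∫ x, Real.log (logisticSigma x) ∂α) - ∫ x, Real.log (logisticSigma x) ∂β| ≤ c := by
  obtain ⟨h1, h2⟩ := hγ
  have hm := logSigma_meas
  set f := fun x : ℝ => Real.log (logisticSigma x) with hf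
  have hi2 : Integrable (fun p : ℝ × ℝ => f p.2) γ := by
    rw [← h2] at hβ
    exact hβ.comp_measurable measurable_snd
  have hmeas : Measurable (fun p : ℝ × ℝ => |p.1 - p.2|) := by fun_prop
  have hd : Integrable (fun p : ℝ × ℝ => |p.1 - p.2|) γ := by
    refine ⟨hmeas.aestronglyMeasurable, ?_⟩
    rw [hasFiniteIntegral_iff_ofReal (Filter.Eventually.of_forall fun p => abs_nonneg _)]
    exact lt_of_le_of_lt hcost ENNReal.ofReal_lt_top
  have hdc : ∫ p, |p.1 - p.2| ∂γ ≤ c := by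
    rw [integral_eq_lintegral_of_nonneg_ae (Filter.Eventually.of_forall fun p => abs_nonneg _)
      hmeas.aestronglyMeasurable]
    exact ENNReal.toReal_le_of_le_ofReal hc hcost
  have hdiff : Integrable (fun p : ℝ × ℝ => f p.1 - f p.2) γ := by
    refine hd.mono' ?_ (Filter.Eventually.of_forall fun p => logSigma_abs p.1 p.2)
    exact ((hm.comp measurable_fst).sub (hm.comp measurable_snd)).aestronglyMeasurable
  have hi1 : Integrable (fun p : ℝ × ℝ => f p.1) γ := by
    have := hdiff.add hi2
    refine this.congr (Filter.Eventually.of_forall fun p => ?_)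
    simp
  constructor
  · rw [← h1]
    exact (integrable_map_measure hm.aestronglyMeasurable measurable_fst.aemeasurable).mpr hi1
  · have e1 : ∫ x, f x ∂α = ∫ p, f p.1 ∂γ := by
      rw [← h1]
      exact integral_map measurable_fst.aemeasurable hm.aestronglyMeasurable
    have e2 : ∫ x, f x ∂β = ∫ p, f p.2 ∂γ := by
      rw [← h2]
      exact integral_map measurable_snd.aemeasurable hm.aestronglyMeasurable
    change |(∫ x, f x ∂α) - ∫ x, f x ∂β| ≤ c
    rw [e1, e2, ← integral_sub hi1 hi2]
    calc |∫ p, (f p.1 - f p.2) ∂γ| ≤ ∫ p, |f p.1 - f p.2| ∂γ := abs_integral_le_integral_abs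
      _ ≤ ∫ p, |p.1 - p.2| ∂γ := integral_mono hdiff.abs hd fun p => logSigma_abs p.1 p.2
      _ ≤ c := hdc

/-- error bound from restricting the follower's ambiguity set
(grouping), with d the directed Hausdorff distance from S to T. -/
theorem stmt6 (ν : Measure ℝ) (hν : IsProbabilityMeasure ν)
    (hm : Integrable (fun x : ℝ => |x|) ν)
    (ε : ℝ) (hε : 0 ≤ ε)
    (T : Set (Measure ℝ)) (hTS : T ⊆ Uball ε ν) (hTne : T.Nonempty)
    (d : ℝ) (hd : 0 ≤ d)
    (happ : ∀ α ∈ Uball ε ν, ∃ α' ∈ T, ∃ γ : Measure (ℝ × ℝ),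
      IsCoupling γ α α' ∧ transportCost γ ≤ ENNReal.ofReal d) :
    0 ≤ sInf ((fun α => ∫ x, Real.log (logisticSigma x) ∂α) '' T) -
        sInf ((fun α => ∫ x, Real.log (logisticSigma x) ∂α) '' Uball ε ν) ∧
    sInf ((fun α => ∫ x, Real.log (logisticSigma x) ∂α) '' T) -
        sInf ((fun α => ∫ x, Real.log (logisticSigma x) ∂α) '' Uball ε ν) ≤ d := by
  have hνi : Integrable (fun x : ℝ => Real.log (logisticSigma x)) ν := by
    refine (hm.add (integrable_const |Real.log (logisticSigma 0)|)).mono'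
      logSigma_meas.aestronglyMeasurable (Filter.Eventually.of_forall fun x => ?_)
    have h := logSigma_abs x 0
    rw [sub_zero] at h
    have h2 := abs_sub_abs_le_abs_sub (Real.log (logisticSigma x)) (Real.log (logisticSigma 0))
    simp only [Real.norm_eq_abs, Pi.add_apply]
    linarith
  have hU : ∀ α ∈ Uball ε ν, Integrable (fun x : ℝ => Real.log (logisticSigma x)) α ∧
      |(∫ x, Real.log (logisticSigma x) ∂α) - ∫ x, Real.log (logisticSigma x) ∂ν| ≤ ε := by
    rintro α ⟨hα, γ, hγ, hcost⟩
    exact coupling_key α ν hα ε hε γ hγ hcost hνi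
  have hbdd : BddBelow ((fun α => ∫ x, Real.log (logisticSigma x) ∂α) '' Uball ε ν) := by
    refine ⟨(∫ x, Real.log (logisticSigma x) ∂ν) - ε, ?_⟩
    rintro _ ⟨α, hα, rfl⟩
    have := (abs_le.mp (hU α hα).2).1
    simp only
    linarith
  have hsub := Set.image_mono (f := fun α : Measure ℝ => ∫ x, Real.log (logisticSigma x) ∂α) hTS
  constructor
  · exact sub_nonneg.mpr (csInf_le_csInf hbdd (hTne.image _) hsub)
  · have hlow : sInf ((fun α => ∫ x, Real.log (logisticSigma x) ∂α) '' T) - d ≤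
        sInf ((fun α => ∫ x, Real.log (logisticSigma x) ∂α) '' Uball ε ν) := by
      refine le_csInf ((hTne.mono hTS).image _) ?_
      rintro _ ⟨α, hα, rfl⟩
      obtain ⟨α', hα', γ, hγ, hcost⟩ := happ α hα
      have hk := (abs_le.mp (coupling_key α α' hα.1 d hd γ hγ hcost (hU α' (hTS hα')).1).2).1
      have hle := csInf_le (hbdd.mono hsub) (Set.mem_image_of_mem
        (fun α : Measure ℝ => ∫ x, Real.log (logisticSigma x) ∂α) hα')
      simp only at hle ⊢
      linarith
    linarith
end

section
/- Let ν be a Borel probability measure on ℝ with finite first moment, let ε ≥ 0, and set S = U_ε(ν). Let T ⊆ S be nonempty, and let d ≥ 0 be such that every α ∈ S admits some α' ∈ T and a coupling of α and α' with transport cost at most d. Let ℓ̃(ξ) = max_{1≤k≤K} (a_k ξ + b_k) with |a_k| ≤ 1 for all k (so ℓ̃ is 1-Lipschitz), ℓ̃(ξ) ≤ ℓ(ξ) for all ξ where ℓ(ξ) = log(1+e^{-ξ}), and let Δ ≥ 0 satisfy ℓ(ξ) − ℓ̃(ξ) ≤ Δ for all ξ. Set m = − sup_{α∈S} ∫ ℓ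 dα and m̃ = − sup_{α∈T} ∫ ℓ̃ dα, and let η ≥ 0 and v ∈ ℝ satisfy m̃ ≤ v ≤ m̃ + η. Then 0 ≤ v − m ≤ Δ + d + η. -/
open MeasureTheory ENNReal Real

theorem aux_diff_integrable {γ : Measure (ℝ × ℝ)} {c : ℝ}
    (hc : transportCost γ ≤ ENNReal.ofReal c) :
    Integrable (fun p : ℝ × ℝ => p.1 - p.2) γ := by
  refine ⟨(by fun_prop : Measurable (fun p : ℝ × ℝ => p.1 - p.2)).aestronglyMeasurable, ?_⟩
  rw [hasFiniteIntegral_iff_norm]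
  exact lt_of_le_of_lt hc ENNReal.ofReal_lt_top

theorem aux_int {γ : Measure (ℝ × ℝ)} {α β : Measure ℝ} {c : ℝ} (h : IsCoupling γ α β)
    (hc : transportCost γ ≤ ENNReal.ofReal c) (hβ : Integrable (fun x : ℝ => x) β) :
    Integrable (fun x : ℝ => x) α := by
  obtain ⟨rfl, rfl⟩ := h
  have h2 : Integrable (fun p : ℝ × ℝ => p.2) γ := hβ.comp_measurable measurable_snd
  have h1 := (aux_diff_integrable hc).add h2
  rw [integrable_map_measure (by fun_prop) (by fun_prop)]
  refine h1.congr (Filter.Eventually.of_forall fun p => ?_)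
  simp

theorem aux_lip {f : ℝ → ℝ} (hf : LipschitzWith 1 f) {α : Measure ℝ} [IsProbabilityMeasure α]
    (hα : Integrable (fun x : ℝ => x) α) : Integrable f α := by
  refine ((integrable_const |f 0|).add hα.abs).mono' hf.continuous.aestronglyMeasurable
    (Filter.Eventually.of_forall fun x => ?_)
  have h := hf.dist_le_mul x 0
  simp only [Real.dist_eq, NNReal.coe_one, one_mul, sub_zero] at h
  have h3 := abs_add_le (f x - f 0) (f 0)
  rw [sub_add_cancel] at h3
  simp only [Real.norm_eq_abs, Pi.add_apply]
  linarith

theorem aux_diff {f : ℝ → ℝ} (hf : LipschitzWith 1 f) {γ : Measure (ℝ × ℝ)} {α β : Measure ℝ}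
    {c : ℝ} (hc0 : 0 ≤ c) (h : IsCoupling γ α β)
    (hc : transportCost γ ≤ ENNReal.ofReal c)
    (hα : Integrable f α) (hβ : Integrable f β) :
    ∫ x, f x ∂α ≤ ∫ x, f x ∂β + c := by
  obtain ⟨rfl, rfl⟩ := h
  have hm := hf.continuous.measurable
  have i1 : Integrable (fun p : ℝ × ℝ => f p.1) γ := hα.comp_measurable measurable_fst
  have i2 : Integrable (fun p : ℝ × ℝ => f p.2) γ := hβ.comp_measurable measurable_snd
  have i3 := (aux_diff_integrable hc).abs
  rw [integral_map (by fun_prop) hm.aestronglyMeasurable,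
    integral_map (by fun_prop) hm.aestronglyMeasurable]
  have h3 : ∫ p : ℝ × ℝ, |p.1 - p.2| ∂γ ≤ c := by
    rw [integral_eq_lintegral_of_nonneg_ae (Filter.Eventually.of_forall fun p => abs_nonneg _)
      i3.aestronglyMeasurable]
    exact ENNReal.toReal_le_of_le_ofReal hc0 hc
  have h4 : ∫ p : ℝ × ℝ, f p.1 ∂γ ≤ ∫ p : ℝ × ℝ, (f p.2 + |p.1 - p.2|) ∂γ := by
    refine integral_mono i1 (i2.add i3) fun p => ?_
    have h := hf.dist_le_mul p.1 p.2
    simp only [Real.dist_eq, NNReal.coe_one, one_mul] at h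
    have := le_abs_self (f p.1 - f p.2)
    show f p.1 ≤ f p.2 + |p.1 - p.2|
    linarith
  rw [integral_add i2 i3] at h4
  linarith

/-- cumulative approximation bound combining piecewise-linear loss
error Δ, grouping restriction error d, and inner-solver tolerance η. -/
theorem stmt7 (ν : Measure ℝ) (hν : IsProbabilityMeasure ν)
    (hmom : Integrable (fun x : ℝ => |x|) ν)
    (ε : ℝ) (hε : 0 ≤ ε)
    (T : Set (Measure ℝ)) (hTS : T ⊆ Uball ε ν) (hTne : T.Nonempty)
    (d : ℝ) (hd : 0 ≤ d)
    (happ : ∀ α ∈ Uball ε ν, ∃ α' ∈ T, ∃ γ : Measure (ℝ × ℝ),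
      IsCoupling γ α α' ∧ transportCost γ ≤ ENNReal.ofReal d)
    {K : ℕ} (hK : 1 ≤ K) (A B : Fin K → ℝ) (hA : ∀ k, |A k| ≤ 1)
    (lt : ℝ → ℝ) (hlt : ∀ x, lt x = ⨆ k, A k * x + B k)
    (hle : ∀ x, lt x ≤ logisticLoss x)
    (Δ : ℝ) (hΔ0 : 0 ≤ Δ) (hΔ : ∀ x, logisticLoss x - lt x ≤ Δ)
    (m mt : ℝ)
    (hmval : m = -sSup ((fun α => ∫ x, logisticLoss x ∂α) '' Uball ε ν))
    (hmtval : mt = -sSup ((fun α => ∫ x, lt x ∂α) '' T))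
    (η : ℝ) (hη : 0 ≤ η) (v : ℝ) (hv1 : mt ≤ v) (hv2 : v ≤ mt + η) :
    0 ≤ v - m ∧ v - m ≤ Δ + d + η := by
  haveI : Nonempty (Fin K) := ⟨⟨0, hK⟩⟩
  have key : ∀ x y, lt x ≤ lt y + |x - y| := by
    intro x y
    rw [hlt x]
    refine ciSup_le fun k => ?_
    have h1 : A k * y + B k ≤ lt y := by
      rw [hlt y]
      exact le_ciSup (f := fun k => A k * y + B k) (Set.finite_range _).bddAbove k
    have h2 : A k * (x - y) ≤ |x - y| := by
      refine (le_abs_self _).trans ?_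
      rw [abs_mul]
      exact mul_le_of_le_one_left (abs_nonneg _) (hA k)
    linarith
  have hL : LipschitzWith 1 lt := by
    refine LipschitzWith.of_dist_le_mul fun x y => ?_
    simp only [Real.dist_eq, NNReal.coe_one, one_mul]
    have h1 := key x y
    have h2 := key y x
    rw [abs_sub_comm y x] at h2
    exact abs_le.2 ⟨by linarith, by linarith⟩
  have hidν : Integrable (fun x : ℝ => x) ν :=
    (integrable_norm_iff (by fun_prop)).1 hmom
  have hltν := aux_lip hL hidν
  have hltS : ∀ α ∈ Uball ε ν, Integrable lt α := by
    rintro α ⟨hp, γ, hγ, hc⟩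
    exact aux_lip hL (aux_int hγ hc hidν)
  have hlogm : Measurable logisticLoss := by
    unfold logisticLoss
    fun_prop
  have hlogS : ∀ α ∈ Uball ε ν, Integrable logisticLoss α := by
    intro α hα
    haveI := hα.1
    refine ((hltS α hα).abs.add (integrable_const Δ)).mono' hlogm.aestronglyMeasurable
      (Filter.Eventually.of_forall fun x => ?_)
    simp only [Real.norm_eq_abs, Pi.add_apply]
    have h1 := hle x
    have h2 := hΔ x
    have h3 := neg_abs_le (lt x)
    have h4 := le_abs_self (lt x)
    exact abs_le.2 ⟨by linarith, by linarith⟩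
  have hlow : ∀ α ∈ Uball ε ν, ∫ x, lt x ∂α ≤ ∫ x, logisticLoss x ∂α := fun α hα =>
    integral_mono (hltS α hα) (hlogS α hα) hle
  have hup : ∀ α ∈ Uball ε ν, ∫ x, logisticLoss x ∂α ≤ ∫ x, lt x ∂α + Δ := by
    intro α hα
    haveI := hα.1
    have h : ∫ x, logisticLoss x ∂α ≤ ∫ x, (lt x + Δ) ∂α := by
      refine integral_mono (hlogS α hα) ((hltS α hα).add (integrable_const Δ)) fun x => ?_
      have := hΔ x
      show logisticLoss x ≤ lt x + Δ
      linarith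
    rw [integral_add (hltS α hα) (integrable_const Δ)] at h
    simpa using h
  have hball : ∀ α ∈ Uball ε ν, ∫ x, lt x ∂α ≤ ∫ x, lt x ∂ν + ε := by
    intro α hα
    obtain ⟨hp, γ, hγ, hc⟩ := id hα
    exact aux_diff hL hε hγ hc (hltS α hα) hltν
  have b1 : BddAbove ((fun α => ∫ x, logisticLoss x ∂α) '' Uball ε ν) := by
    refine ⟨∫ x, lt x ∂ν + ε + Δ, ?_⟩
    rintro _ ⟨α, hα, rfl⟩
    have h1 := hup α hα
    have h2 := hball α hα
    show ∫ x, logisticLoss x ∂α ≤ _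
    linarith
  have b2 : BddAbove ((fun α => ∫ x, lt x ∂α) '' T) := by
    refine ⟨∫ x, lt x ∂ν + ε, ?_⟩
    rintro _ ⟨α, hα, rfl⟩
    exact hball α (hTS hα)
  have c1 : sSup ((fun α => ∫ x, lt x ∂α) '' T)
      ≤ sSup ((fun α => ∫ x, logisticLoss x ∂α) '' Uball ε ν) := by
    refine csSup_le (hTne.image _) ?_
    rintro _ ⟨α, hα, rfl⟩
    exact (hlow α (hTS hα)).trans (le_csSup b1 ⟨α, hTS hα, rfl⟩)
  have c2 : sSup ((fun α => ∫ x, logisticLoss x ∂α) '' Uball ε ν)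
      ≤ sSup ((fun α => ∫ x, lt x ∂α) '' T) + d + Δ := by
    refine csSup_le ((hTne.mono hTS).image _) ?_
    rintro _ ⟨α, hα, rfl⟩
    obtain ⟨α', hα', γ, hγ, hc⟩ := happ α hα
    have h1 := hup α hα
    have h2 := aux_diff hL hd hγ hc (hltS α hα) (hltS α' (hTS hα'))
    have h3 : ∫ x, lt x ∂α' ≤ sSup ((fun α => ∫ x, lt x ∂α) '' T) :=
      le_csSup b2 ⟨α', hα', rfl⟩
    show ∫ x, logisticLoss x ∂α ≤ _
    linarith
  constructor <;> linarith
end
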